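/- Let R > 0, let U = B(0,R) be the open ball in ℂ, let f : ℂ → ℂ be analytic and nonzero at every point of U with f(0) = 1, and let g be analytic on U with exp(g(w)) = f(w) for all w ∈ U and g(0) = 0. For k ≥ 1 set c_k = g^{(k)}(0)/k!. Fix an integer k ≥ 1 and z ∈ U, and for real r > 1 form the geometric sampling products with common ratio r for every index. Then lim_{r→1⁺} Q(f, F*_{max=k}, z) = exp(c_k · z^k); that is, the limit as r ↓ 1 of ∏_{S ⊆ {1,…,k}, k ∈ S} P(f, S, z)^{(−1)^{|S|−1}} equals the k-th function factor f_k(z) = exp(c_k z^k) of f. (Isolating one function component factor.) -/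

import Mathlib

open Topology

/-- Geometric sampling point with real ratio `r > 1`:
`X_{k,n}(r) = (r^k - 1)^{1/k} / r^n`, positive real `k`-th root. -/
noncomputable def Xr (k n : ℕ) (r : ℝ) : ℂ :=
  (((r ^ k - 1) ^ ((k : ℝ))⁻¹ : ℝ) : ℂ) / (r : ℂ) ^ n

/-- Geometric sampling product `P(f, S, z)` with common real ratio `r`. -/
noncomputable def P (f : ℂ → ℂ) (r : ℝ) (S : Finset ℕ) (z : ℂ) : ℂ :=
  ∏' ν : {x // x ∈ S} → ℕ+, f ((∏ k : {x // x ∈ S}, Xr k.1 (ν k : ℕ) r) * z)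

/-- Geometric sampling quotient `Q(f, F, z) = ∏_{S ∈ F} P(f,S,z)^{(-1)^{|S|-1}}`. -/
noncomputable def Q (f : ℂ → ℂ) (r : ℝ) (F : Finset (Finset ℕ)) (z : ℂ) : ℂ :=
  ∏ S ∈ F, P f r S z ^ ((-1 : ℤ) ^ (S.card + 1))

/-- `F*_{max = k}`: the family of subsets of `{1, …, k}` containing `k`. -/
def Fmax (k : ℕ) : Finset (Finset ℕ) :=
  ((Finset.Icc 1 k).powerset).filter (fun S => k ∈ S)

/-!
Along the segment from `0` to `z` write `log f (t z) = ∑ₘ aₘ tᵐ`. Summing over the sampling points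
of index `j` acts diagonally on monomials: it multiplies the `m`-th term by the power sum
`M_{j,m} = ∑ₙ X_{j,n}ᵐ = (r^j - 1)^{m/j} / (r^m - 1)`. Hence `log P(f, S, z)` is obtained by giving
`aₘ` the weight `∏_{j ∈ S} M_{j,m}`, and by inclusion–exclusion `log Q(f, F*_{max=k}, z)` by giving
it the weight `M_{k,m} ∏_{j < k} (1 - M_{j,m})`. As `M_{j,j} = 1`, the terms with `m < k` vanish
exactly, while `M_{j,m} → 0` as `r → 1⁺` for `m > j`, so that in the limit the `k`-th term is the
only one left. For `m ≥ 1` the weights lie in `[0, 1]`, which allows passing to the limit under the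
sum.
-/

open Filter

lemma summable_norm_and_hasSum_prod_pi {A : Type*} [NormedCommRing A] [CompleteSpace A]
    {ι : Type*} [hι : Fintype ι] ⦃κ : ι → Type*⦄ ⦃u : ∀ i, κ i → A⦄ ⦃s : ι → A⦄
    (hnorm : ∀ i, Summable fun n => ‖u i n‖) (hu : ∀ i, HasSum (u i) (s i)) :
    (Summable fun ν : ∀ i, κ i => ‖∏ i, u i (ν i)‖) ∧
      HasSum (fun ν : ∀ i, κ i => ∏ i, u i (ν i)) (∏ i, s i) := by
  revert κ u s
  refine Fintype.induction_empty_option ?of_equiv ?empty ?option ι (h_fintype := hι)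
  case of_equiv =>
    intro α β _ e ih κ u s hnorm hu
    let _ : Fintype α := Fintype.ofEquiv β e.symm
    have hα := ih (fun i => hnorm (e i)) fun i => hu (e i)
    rw [← (Equiv.piCongrLeft κ e).summable_iff, ← (Equiv.piCongrLeft κ e).hasSum_iff,
      ← e.prod_comp s]
    simpa only [Function.comp_def, ← e.prod_comp, Equiv.piCongrLeft_apply_apply] using hα
  case empty =>
    intro κ u s _ _
    exact ⟨Summable.of_finite, by simp⟩
  case option =>
    intro α _ ih κ u s hnorm hu
    let v (ν : ∀ i, κ (some i)) : A := ∏ i, u (some i) (ν i)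
    obtain ⟨hsummable, hsum⟩ : (Summable fun ν => ‖v ν‖) ∧ HasSum v (∏ i, s (some i)) :=
      ih (fun i => hnorm (some i)) fun i => hu (some i)
    have hsplit (q : κ none × ∀ i, κ (some i)) :
        ∏ i, u i (Equiv.piOptionEquivProd.symm q i) = u none q.1 * v q.2 :=
      Fintype.prod_option _
    have hmul_norm := (hnorm none).mul_norm hsummable
    rw [← Equiv.piOptionEquivProd.symm.summable_iff, ← Equiv.piOptionEquivProd.symm.hasSum_iff,
      Fintype.prod_option]
    exact ⟨hmul_norm.congr fun q => congrArg norm (hsplit q).symm,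
      ((hu none).mul hsum hmul_norm.of_norm).congr_fun hsplit⟩

lemma hasSum_tsum_smul_of_nonneg {M N E : Type*} [NormedAddCommGroup E] [NormedSpace ℝ E]
    [CompleteSpace E] {a : M → E} {w : M → N → ℝ} {p : M → ℝ} (hw : ∀ m n, 0 ≤ w m n)
    (hp : ∀ m, a m ≠ 0 → HasSum (w m) (p m)) (ha : Summable fun m => p m * ‖a m‖) :
    HasSum (fun n => ∑' m, w m n • a m) (∑' m, p m • a m) := by
  have hrow : ∀ m, HasSum (fun n => w m n • a m) (p m • a m) := fun m => by
    rcases eq_or_ne (a m) 0 with h | h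
    · simp [h, hasSum_zero]
    · exact (hp m h).smul_const (a m)
  have hrow_norm : ∀ m, HasSum (fun n => ‖w m n • a m‖) (p m * ‖a m‖) := fun m => by
    simp only [norm_smul, Real.norm_of_nonneg (hw m _)]
    rcases eq_or_ne (a m) 0 with h | h
    · simp [h, hasSum_zero]
    · exact (hp m h).mul_right ‖a m‖
  have hprod : Summable fun q : M × N => w q.1 q.2 • a q.1 :=
    Summable.of_norm <| (summable_prod_of_nonneg fun _ => norm_nonneg _).mpr
      ⟨fun m => (hrow_norm m).summable, by simpa only [(hrow_norm _).tsum_eq] using ha⟩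
  rw [(hprod.hasSum.prod_fiberwise hrow).tsum_eq]
  have hswap : Summable fun q : N × M => w q.2 q.1 • a q.2 := hprod.prod_symm
  rw [← (Equiv.prodComm N M).tsum_eq fun q : M × N => w q.1 q.2 • a q.1]
  exact hswap.hasSum.prod_fiberwise fun n => (hswap.prod_factor n).hasSum

lemma sum_powerset_insert_filter_mem_neg_one_pow {ι A : Type*} [DecidableEq ι] [CommRing A]
    {s : Finset ι} {k : ι} (hk : k ∉ s) (u : ι → A) :
    ∑ S ∈ (insert k s).powerset with k ∈ S, (-1) ^ (S.card + 1) * ∏ j ∈ S, u j =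
      u k * ∏ j ∈ s, (1 - u j) := by
  have hnotMem : ∀ T ∈ s.powerset, k ∉ T := fun T hT hkT => hk (Finset.mem_powerset.mp hT hkT)
  rw [Finset.sum_filter, Finset.sum_powerset_insert hk,
    Finset.sum_eq_zero fun T hT => if_neg (hnotMem T hT), zero_add]
  simp only [sub_eq_add_neg, Finset.prod_one_add, Finset.mul_sum]
  refine Finset.sum_congr rfl fun T hT => ?_
  rw [if_pos (Finset.mem_insert_self k T), Finset.card_insert_of_notMem (hnotMem T hT),
    Finset.prod_insert (hnotMem T hT), Finset.prod_neg]
  ring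

section SamplingPoints

variable {j m : ℕ} {r : ℝ} {S : Finset ℕ}

/-- The numerator `(r^j - 1)^{1/j}` of the sampling points of index `j`. -/
noncomputable def samplingScale (j : ℕ) (r : ℝ) : ℝ := (r ^ j - 1) ^ (j : ℝ)⁻¹

/-- The sampling point `X_{j,n}(r)` as a real number. -/
noncomputable def samplingPoint (j n : ℕ) (r : ℝ) : ℝ := samplingScale j r / r ^ n

/-- The product of the sampling points selected by a tuple of exponents indexed by `S`. -/
noncomputable def samplingTuplePoint (S : Finset ℕ) (r : ℝ) (ν : {j // j ∈ S} → ℕ+) : ℝ :=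
  ∏ j : {j // j ∈ S}, samplingPoint j (ν j) r

/-- The `m`-th power sum of the sampling points of index `j`: the factor by which `z ^ m` is
multiplied when a function is summed over these points. For `m = 0` the series diverges and the
value is the junk value `0`. -/
noncomputable def samplingMoment (j m : ℕ) (r : ℝ) : ℝ := ∑' n : ℕ+, samplingPoint j n r ^ m

lemma prod_Xr_eq_samplingTuplePoint (ν : {j // j ∈ S} → ℕ+) :
    ∏ j : {j // j ∈ S}, Xr j (ν j) r = samplingTuplePoint S r ν := by
  simp [samplingTuplePoint, samplingPoint, samplingScale, Xr]

lemma samplingScale_nonneg (j : ℕ) (hr : 1 ≤ r) : 0 ≤ samplingScale j r :=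
  Real.rpow_nonneg (sub_nonneg.mpr (one_le_pow₀ hr)) _

lemma samplingScale_pow (hj : j ≠ 0) (hr : 1 ≤ r) : samplingScale j r ^ j = r ^ j - 1 :=
  Real.rpow_inv_natCast_pow (sub_nonneg.mpr (one_le_pow₀ hr)) hj

lemma samplingScale_le (hj : j ≠ 0) (hr : 1 ≤ r) : samplingScale j r ≤ r := by
  refine le_of_pow_le_pow_left₀ hj (by linarith) ?_
  rw [samplingScale_pow hj hr]
  linarith

lemma tendsto_samplingScale (hj : j ≠ 0) : Tendsto (samplingScale j) (𝓝[>] 1) (𝓝 0) := by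
  have hcont : Continuous (samplingScale j) :=
    Continuous.rpow_const (by fun_prop) fun _ => Or.inr (by positivity)
  have hone : samplingScale j 1 = 0 := by simp [samplingScale, hj]
  exact hone ▸ (hcont.tendsto 1).mono_left nhdsWithin_le_nhds

lemma samplingPoint_nonneg (j n : ℕ) (hr : 1 ≤ r) : 0 ≤ samplingPoint j n r :=
  div_nonneg (samplingScale_nonneg j hr) (by positivity)

lemma samplingPoint_le_samplingScale (j n : ℕ) (hr : 1 ≤ r) :
    samplingPoint j n r ≤ samplingScale j r :=
  div_le_self (samplingScale_nonneg j hr) (one_le_pow₀ hr)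

lemma samplingPoint_le_one (hj : j ≠ 0) (n : ℕ+) (hr : 1 ≤ r) : samplingPoint j n r ≤ 1 :=
  div_le_one_of_le₀ ((samplingScale_le hj hr).trans (le_self_pow₀ hr n.ne_zero)) (by positivity)

lemma samplingTuplePoint_mem_Icc (hS : ∀ j ∈ S, j ≠ 0) (hr : 1 ≤ r) (ν : {j // j ∈ S} → ℕ+) :
    samplingTuplePoint S r ν ∈ Set.Icc 0 1 :=
  ⟨Finset.prod_nonneg fun j _ => samplingPoint_nonneg j _ hr,
    Finset.prod_le_one (fun j _ => samplingPoint_nonneg j _ hr)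
      fun j _ => samplingPoint_le_one (hS j j.2) _ hr⟩

lemma hasSum_samplingPoint_pow (j : ℕ) (hm : m ≠ 0) (hr : 1 < r) :
    HasSum (fun n : ℕ+ => samplingPoint j n r ^ m) (samplingScale j r ^ m / (r ^ m - 1)) := by
  have hrm : 1 < r ^ m := one_lt_pow₀ hr hm
  have hgeom := (hasSum_geometric_of_lt_one (by positivity) (inv_lt_one_of_one_lt₀ hrm)).mul_left
    (samplingScale j r ^ m * (r ^ m)⁻¹)
  have hterm (i : ℕ) : samplingPoint j (i + 1) r ^ m =
      samplingScale j r ^ m * (r ^ m)⁻¹ * (r ^ m)⁻¹ ^ i := by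
    rw [samplingPoint, div_pow, pow_right_comm, pow_succ', div_eq_mul_inv, mul_inv, inv_pow,
      mul_assoc]
  have hsum : samplingScale j r ^ m * (r ^ m)⁻¹ * (1 - (r ^ m)⁻¹)⁻¹ =
      samplingScale j r ^ m / (r ^ m - 1) := by
    rw [mul_assoc, ← mul_inv, mul_one_sub, mul_inv_cancel₀ (by positivity), div_eq_mul_inv]
  rw [← Equiv.pnatEquivNat.symm.hasSum_iff, ← hsum]
  exact hgeom.congr_fun hterm

lemma hasSum_samplingMoment (j : ℕ) (hm : m ≠ 0) (hr : 1 < r) :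
    HasSum (fun n : ℕ+ => samplingPoint j n r ^ m) (samplingMoment j m r) :=
  (hasSum_samplingPoint_pow j hm hr).summable.hasSum

lemma hasSum_samplingTuplePoint_pow (S : Finset ℕ) (hm : m ≠ 0) (hr : 1 < r) :
    HasSum (fun ν => samplingTuplePoint S r ν ^ m) (∏ j ∈ S, samplingMoment j m r) := by
  have hmoment := fun j : {j // j ∈ S} => hasSum_samplingMoment j hm hr
  rw [← Finset.prod_coe_sort]
  simpa only [samplingTuplePoint, Finset.prod_pow] using
    (summable_norm_and_hasSum_prod_pi (fun j => (hmoment j).summable.norm) hmoment).2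

lemma samplingMoment_nonneg (j m : ℕ) (hr : 1 ≤ r) : 0 ≤ samplingMoment j m r :=
  tsum_nonneg fun n => pow_nonneg (samplingPoint_nonneg j n hr) m

lemma samplingMoment_self (hj : j ≠ 0) (hr : 1 < r) : samplingMoment j j r = 1 := by
  rw [samplingMoment, (hasSum_samplingPoint_pow j hj hr).tsum_eq, samplingScale_pow hj hr.le,
    div_self (sub_pos.mpr (one_lt_pow₀ hr hj)).ne']

lemma samplingMoment_le_pow_sub {b : ℝ} (hj : j ≠ 0) (hjm : j ≤ m) (hr : 1 < r)
    (hb : ∀ n : ℕ+, samplingPoint j n r ≤ b) : samplingMoment j m r ≤ b ^ (m - j) := by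
  have hm : m ≠ 0 := by omega
  have hbound := (hasSum_samplingMoment j hj hr).mul_left (b ^ (m - j))
  rw [samplingMoment_self hj hr, mul_one] at hbound
  refine hasSum_le (fun n => ?_) (hasSum_samplingMoment j hm hr) hbound
  have hx := samplingPoint_nonneg j n hr.le
  rw [← pow_sub_mul_pow _ hjm]
  gcongr
  exact hb n

lemma samplingMoment_mem_Icc (hj : j ≠ 0) (hjm : j ≤ m) (hr : 1 < r) :
    samplingMoment j m r ∈ Set.Icc 0 1 :=
  ⟨samplingMoment_nonneg j m hr.le, by
    simpa using samplingMoment_le_pow_sub hj hjm hr fun n => samplingPoint_le_one hj n hr.le⟩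

lemma tendsto_samplingMoment_of_lt (hj : j ≠ 0) (hjm : j < m) :
    Tendsto (samplingMoment j m) (𝓝[>] 1) (𝓝 0) := by
  have hscale : Tendsto (fun r => samplingScale j r ^ (m - j)) (𝓝[>] 1) (𝓝 0) := by
    simpa [Nat.sub_ne_zero_of_lt hjm] using (tendsto_samplingScale hj).pow (m - j)
  refine squeeze_zero' ?_ ?_ hscale <;> filter_upwards [self_mem_nhdsWithin] with r hr
  · exact samplingMoment_nonneg j m (Set.mem_Ioi.mp hr).le
  · exact samplingMoment_le_pow_sub hj hjm.le hr
      fun n => samplingPoint_le_samplingScale j n (Set.mem_Ioi.mp hr).le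

lemma summable_prod_samplingMoment_mul_norm {E : Type*} [SeminormedAddCommGroup E] {a : ℕ → E}
    (ha : Summable fun m => ‖a m‖) (hS : ∀ j ∈ S, j ≠ 0) (hr : 1 < r) :
    Summable fun m => (∏ j ∈ S, samplingMoment j m r) * ‖a m‖ := by
  have hnonneg : ∀ m, 0 ≤ ∏ j ∈ S, samplingMoment j m r := fun m =>
    Finset.prod_nonneg fun j _ => samplingMoment_nonneg j m hr.le
  refine ha.of_norm_bounded_eventually_nat ?_
  filter_upwards [eventually_ge_atTop (S.sup id)] with m hm
  rw [norm_mul, norm_norm, Real.norm_of_nonneg (hnonneg m)]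
  refine mul_le_of_le_one_left (norm_nonneg _) (Finset.prod_le_one
    (fun j _ => samplingMoment_nonneg j m hr.le) fun j hj => ?_)
  exact (samplingMoment_mem_Icc (hS j hj) ((Finset.le_sup (f := id) hj).trans hm) hr).2

end SamplingPoints

section SamplingProducts

variable {f : ℂ → ℂ} {z : ℂ} {a : ℕ → ℂ} {r : ℝ} {S : Finset ℕ}

lemma P_eq_cexp_tsum (ha : Summable fun m => ‖a m‖) (ha0 : a 0 = 0)
    (hf : ∀ t ∈ Set.Icc (0 : ℝ) 1, f (t • z) = Complex.exp (∑' m, t ^ m • a m))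
    (hS : ∀ j ∈ S, j ≠ 0) (hr : 1 < r) :
    P f r S z = Complex.exp (∑' m, (∏ j ∈ S, samplingMoment j m r) • a m) := by
  have hmem := samplingTuplePoint_mem_Icc hS hr.le
  have hlog : HasSum (fun ν => ∑' m, samplingTuplePoint S r ν ^ m • a m)
      (∑' m, (∏ j ∈ S, samplingMoment j m r) • a m) :=
    hasSum_tsum_smul_of_nonneg (fun m ν => pow_nonneg (hmem ν).1 m)
      (fun m hm => hasSum_samplingTuplePoint_pow S (by rintro rfl; exact hm ha0) hr)
      (summable_prod_samplingMoment_mul_norm ha hS hr)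
  rw [P, ← hlog.cexp.tprod_eq]
  refine tprod_congr fun ν => ?_
  rw [prod_Xr_eq_samplingTuplePoint, ← Complex.real_smul, hf _ (hmem ν), Function.comp_apply]

lemma Q_eq_cexp_tsum {F : Finset (Finset ℕ)} (ha : Summable fun m => ‖a m‖) (ha0 : a 0 = 0)
    (hf : ∀ t ∈ Set.Icc (0 : ℝ) 1, f (t • z) = Complex.exp (∑' m, t ^ m • a m))
    (hF : ∀ S ∈ F, ∀ j ∈ S, j ≠ 0) (hr : 1 < r) :
    Q f r F z = Complex.exp
      (∑' m, (∑ S ∈ F, (-1) ^ (S.card + 1) * ∏ j ∈ S, samplingMoment j m r) • a m) := by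
  have hsummable : ∀ S ∈ F, Summable fun m =>
      ((-1 : ℝ) ^ (S.card + 1) * ∏ j ∈ S, samplingMoment j m r) • a m := fun S hS => by
    refine Summable.of_norm ((summable_prod_samplingMoment_mul_norm ha (hF S hS) hr).congr
      fun m => ?_)
    rw [norm_smul, norm_mul, norm_pow, norm_neg, norm_one, one_pow, one_mul, Real.norm_of_nonneg
      (Finset.prod_nonneg fun j _ => samplingMoment_nonneg j m hr.le)]
  simp only [Finset.sum_smul]
  rw [Summable.tsum_finsetSum hsummable, Complex.exp_sum, Q]
  refine Finset.prod_congr rfl fun S hS => ?_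
  rw [P_eq_cexp_tsum ha ha0 hf (hF S hS) hr, ← Complex.exp_int_mul, ← tsum_mul_left]
  simp [mul_assoc]

end SamplingProducts

section IsolatingWeight

variable {k m : ℕ} {r : ℝ}

/-- The factor by which the logarithm of `Q f r (Fmax k)` multiplies the `m`-th Taylor term of a
logarithm of `f`. -/
noncomputable def isolatingWeight (k m : ℕ) (r : ℝ) : ℝ :=
  samplingMoment k m r * ∏ j ∈ Finset.Ico 1 k, (1 - samplingMoment j m r)

lemma sum_Fmax_prod_samplingMoment (hk : 1 ≤ k) (m : ℕ) (r : ℝ) :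
    ∑ S ∈ Fmax k, (-1) ^ (S.card + 1) * ∏ j ∈ S, samplingMoment j m r =
      isolatingWeight k m r := by
  rw [Fmax, ← Finset.Ico_insert_right hk, isolatingWeight]
  exact sum_powerset_insert_filter_mem_neg_one_pow Finset.right_notMem_Ico _

lemma isolatingWeight_of_lt (hm : m ≠ 0) (hmk : m < k) (hr : 1 < r) :
    isolatingWeight k m r = 0 :=
  mul_eq_zero_of_right _ <| Finset.prod_eq_zero
    (Finset.mem_Ico.mpr ⟨Nat.one_le_iff_ne_zero.mpr hm, hmk⟩)
    (by rw [samplingMoment_self hm hr, sub_self])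

lemma isolatingWeight_mem_Icc (hk : 1 ≤ k) (hm : m ≠ 0) (hr : 1 < r) :
    isolatingWeight k m r ∈ Set.Icc 0 1 := by
  rcases lt_or_ge m k with hmk | hkm
  · simp [isolatingWeight_of_lt hm hmk hr]
  · refine unitInterval.mul_mem (samplingMoment_mem_Icc (by omega) hkm hr)
      (unitInterval.prod_mem fun j hj => Set.Icc.mem_iff_one_sub_mem.mp ?_)
    obtain ⟨hj1, hjk⟩ := Finset.mem_Ico.mp hj
    exact samplingMoment_mem_Icc (by omega) (by omega) hr

lemma tendsto_isolatingWeight (hk : 1 ≤ k) (hm : m ≠ 0) :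
    Tendsto (isolatingWeight k m) (𝓝[>] 1) (𝓝 (if m = k then 1 else 0)) := by
  rcases lt_or_ge m k with hmk | hkm
  · rw [if_neg hmk.ne]
    refine tendsto_const_nhds.congr' ?_
    filter_upwards [self_mem_nhdsWithin] with r hr using (isolatingWeight_of_lt hm hmk hr).symm
  have hmoment : Tendsto (samplingMoment k m) (𝓝[>] 1) (𝓝 (if m = k then 1 else 0)) := by
    split_ifs with hmk
    · refine tendsto_const_nhds.congr' ?_
      filter_upwards [self_mem_nhdsWithin] with r hr
      rw [hmk, samplingMoment_self (by omega) hr]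
    · exact tendsto_samplingMoment_of_lt (by omega) (by omega)
  have hprod : Tendsto (fun r => ∏ j ∈ Finset.Ico 1 k, (1 - samplingMoment j m r)) (𝓝[>] 1)
      (𝓝 (∏ _j ∈ Finset.Ico 1 k, (1 - 0))) := by
    refine tendsto_finsetProd _ fun j hj => ?_
    obtain ⟨hj1, hjk⟩ := Finset.mem_Ico.mp hj
    exact tendsto_const_nhds.sub (tendsto_samplingMoment_of_lt (by omega) (by omega))
  rw [sub_zero, Finset.prod_const_one] at hprod
  have hmul := hmoment.mul hprod
  rwa [mul_one] at hmul

lemma tendsto_tsum_isolatingWeight_smul {E : Type*} [NormedAddCommGroup E] [NormedSpace ℝ E]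
    [CompleteSpace E] {a : ℕ → E} (ha : Summable fun m => ‖a m‖) (ha0 : a 0 = 0) (hk : 1 ≤ k) :
    Tendsto (fun r => ∑' m, isolatingWeight k m r • a m) (𝓝[>] 1) (𝓝 (a k)) := by
  have hterm : ∀ m, Tendsto (fun r => isolatingWeight k m r • a m) (𝓝[>] 1)
      (𝓝 (if m = k then a m else 0)) := fun m => by
    rcases eq_or_ne m 0 with rfl | hm
    · simp [ha0]
    · simpa using (tendsto_isolatingWeight hk hm).smul_const (a m)
  have hbound : ∀ᶠ r in 𝓝[>] (1 : ℝ), ∀ m, ‖isolatingWeight k m r • a m‖ ≤ ‖a m‖ := by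
    filter_upwards [self_mem_nhdsWithin] with r hr m
    rcases eq_or_ne m 0 with rfl | hm
    · simp [ha0]
    · obtain ⟨hnonneg, hle⟩ := isolatingWeight_mem_Icc hk hm hr
      rw [norm_smul, Real.norm_of_nonneg hnonneg]
      exact mul_le_of_le_one_left (norm_nonneg _) hle
  simpa only [tsum_ite_eq] using tendsto_tsum_of_dominated_convergence ha hterm hbound

end IsolatingWeight

lemma hasSum_iteratedDeriv_div_factorial_mul_pow {g : ℂ → ℂ} {c w : ℂ} {R : ℝ}
    (hg : DifferentiableOn ℂ g (Metric.ball c R)) (hw : w ∈ Metric.ball c R) :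
    HasSum (fun m => iteratedDeriv m g c / (Nat.factorial m : ℂ) * (w - c) ^ m) (g w) := by
  refine (Complex.hasSum_taylorSeries_on_ball hg hw).congr_fun fun m => ?_
  rw [smul_eq_mul, smul_eq_mul]
  ring

theorem stmt_7_general {f : ℂ → ℂ} {z : ℂ} {a : ℕ → ℂ} (ha : Summable fun m => ‖a m‖)
    (ha0 : a 0 = 0)
    (hf : ∀ t ∈ Set.Icc (0 : ℝ) 1, f (t • z) = Complex.exp (∑' m, t ^ m • a m))
    {k : ℕ} (hk : 1 ≤ k) :
    Tendsto (fun r => Q f r (Fmax k) z) (𝓝[>] 1) (𝓝 (Complex.exp (a k))) := by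
  have hpos : ∀ S ∈ Fmax k, ∀ j ∈ S, j ≠ 0 := fun S hS j hj => by
    have := Finset.mem_Icc.mp (Finset.mem_powerset.mp (Finset.mem_filter.mp hS).1 hj)
    omega
  refine (tendsto_tsum_isolatingWeight_smul ha ha0 hk).cexp.congr' ?_
  filter_upwards [self_mem_nhdsWithin] with r hr
  simp only [Q_eq_cexp_tsum ha ha0 hf hpos hr, sum_Fmax_prod_samplingMoment hk]

/-- Isolating one function component factor: with `f` analytic and nonzero on
`B(0,R)`, `f 0 = 1`, `g` an analytic logarithm of `f` on `B(0,R)` with `g 0 = 0`, and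
`c_k = g^{(k)}(0)/k!`, for `k ≥ 1` and `z ∈ B(0,R)` one has
`lim_{r → 1⁺} Q(f, F*_{max=k}, z) = exp (c_k z^k)`, the `k`-th function factor of `f`. -/
theorem stmt_7 (R : ℝ) (hR : 0 < R) (f g : ℂ → ℂ)
    (hf : ∀ w ∈ Metric.ball (0 : ℂ) R, AnalyticAt ℂ f w)
    (hfne : ∀ w ∈ Metric.ball (0 : ℂ) R, f w ≠ 0)
    (hf0 : f 0 = 1)
    (hg : ∀ w ∈ Metric.ball (0 : ℂ) R, AnalyticAt ℂ g w)
    (hgf : ∀ w ∈ Metric.ball (0 : ℂ) R, Complex.exp (g w) = f w)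
    (hg0 : g 0 = 0)
    (k : ℕ) (hk : 1 ≤ k)
    (z : ℂ) (hz : z ∈ Metric.ball (0 : ℂ) R) :
    Filter.Tendsto (fun r : ℝ => Q f r (Fmax k) z) (𝓝[>] (1 : ℝ))
      (𝓝 (Complex.exp (iteratedDeriv k g 0 / (Nat.factorial k : ℂ) * z ^ k))) := by
  have htaylor (w : ℂ) (hw : w ∈ Metric.ball 0 R) :
      HasSum (fun m => iteratedDeriv m g 0 / (Nat.factorial m : ℂ) * w ^ m) (g w) := by
    simpa only [sub_zero] using
      hasSum_iteratedDeriv_div_factorial_mul_pow (AnalyticOnNhd.differentiableOn hg) hw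
  refine stmt_7_general (htaylor z hz).summable.norm (by simp [hg0]) (fun t ht => ?_) hk
  have htz : t • z ∈ Metric.ball (0 : ℂ) R :=
    (convex_ball 0 R).smul_mem_of_zero_mem (Metric.mem_ball_self hR) hz ht
  simp only [← hgf _ htz, ← (htaylor _ htz).tsum_eq, smul_pow, mul_smul_comm]
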